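/- For every sequence R : ℕ → Set ℕ of subsets of ℕ there exists an infinite set S ⊆ ℕ that is strongly cohesive for (R_n)_{n∈ℕ}: for every n there exists s such that for every i < n, either every j ∈ S with j ≥ s satisfies j ∈ R_i, or every j ∈ S with j ≥ s satisfies j ∉ R_i. -/

import Mathlib

/-- The strong cohesive principle: for every sequence `(R_n)` of subsets of `ℕ`
there is an infinite set `S` that is strongly cohesive for `(R_n)`, i.e. for
every `n` there is a single threshold `s` beyond which the elements of `S` lie
entirely inside `R_i` or entirely outside `R_i`, simultaneously for all `i < n`. -/
theorem strongly_cohesive_exists (R : ℕ → Set ℕ) :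
    ∃ S : Set ℕ, S.Infinite ∧
      ∀ n : ℕ, ∃ s : ℕ, ∀ i < n,
        (∀ j ∈ S, s ≤ j → j ∈ R i) ∨ (∀ j ∈ S, s ≤ j → j ∉ R i) := by
  classical
  let U : Ultrafilter ℕ := Filter.hyperfilter ℕ
  have hU : (U : Filter ℕ) ≤ Filter.atTop := by
    have h := Filter.hyperfilter_le_cofinite (α := ℕ)
    rwa [Nat.cofinite_eq_atTop] at h
  have hP : ∀ n : ℕ, ∃ᶠ k in Filter.atTop, ∀ i < n, (k ∈ R i ↔ R i ∈ U) := by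
    intro n
    have hev : ∀ᶠ k in (U : Filter ℕ), ∀ i ∈ Set.Iio n, (k ∈ R i ↔ R i ∈ U) := by
      rw [Filter.eventually_all_finite (Set.finite_Iio n)]
      intro i _
      by_cases h : R i ∈ U
      · filter_upwards [h] with k hk
        exact iff_of_true hk h
      · have h' : (R i)ᶜ ∈ (U : Filter ℕ) := Ultrafilter.compl_mem_iff_notMem.mpr h
        filter_upwards [h'] with k hk
        exact iff_of_false hk h
    exact hev.frequently.filter_mono hU
  obtain ⟨f, hf, hfP⟩ := Filter.extraction_forall_of_frequently hP
  refine ⟨Set.range f, Set.infinite_range_of_injective hf.injective, fun n => ⟨f n, ?_⟩⟩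
  intro i hi
  by_cases h : R i ∈ U
  · left
    rintro _ ⟨m, rfl⟩ hm
    exact (hfP m i (hi.trans_le (hf.le_iff_le.mp hm))).mpr h
  · right
    rintro _ ⟨m, rfl⟩ hm hmem
    exact h ((hfP m i (hi.trans_le (hf.le_iff_le.mp hm))).mp hmem)
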